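/- There exist constants c > 0, c' > 0, and ε₀ > 0 such that for every field K: (i) for every ε ∈ (0, ε₀) and every n, the Walsh–Hadamard matrix H_n has (2^{−n(1−ε)})-probabilistic rank at most 2^{n − c·ε²·n/log₂(1/ε)} over K; and (ii) for every ε ∈ (0, 1/2] and every n, H_n has ε-probabilistic rank at most (1/ε)^{c'·(1 + √n·log₂ n)} over K. -/

import Mathlib

/-!
Both bounds follow from deterministic approximations. If a matrix `L` of low rank agrees with `H_n`
outside few entries of each row, then `H_n` has low probabilistic rank: since
`H_n(x, y) = H_n(x, v) * H_n(x, y + v)`, the random matrix `H_n(x, v) * L(x, y + v)`, with `v`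
uniform and addition modulo two, has the same rank bound and is correct at each entry with high
probability
(`probRank_of_approx`). So it suffices to bound the row-wise rigidity of `H_n`, recorded by the
predicate `Approx`.

High error. The predicate `Approx` is stable under products, ranks adding up and sparsities
multiplying (`Approx.mul`). Write `H_k = [[h, h], [h, -h]]` with `h = H_{k-1}`; as `h * h` is
scalar, `H_k` is a product of three block unitriangular matrices and a diagonal one (`dbl_factor`,
valid when `2` is invertible), hence `H_k^{⊗ m}` is the product of their Kronecker powers. In such a
power `E^{⊗ m}`, an entry at words `x, y` is nonzero only if at each position the letters agree or
pass from one half of the alphabet to the other, always in the same direction; for words with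
nearly the typical number of letters in each half this allows very few disagreements. Deleting the
atypical rows and columns costs rank `2 ^ (k * m)` times a Chernoff factor, and leaves sparse rows
(`approx_elementary`). Choosing `2 ^ k` of order `1 / ε` and `m = n / k` gives the bound once
`ε ^ 2 * n / log₂ (1 / ε)` is large (`approx_large`). When it is bounded, a constant factor in
the rank suffices: for `n = 2 * p` one of `H_n - 2 ^ p`, `H_n + 2 ^ p` has rank at most
`2 ^ n / 2`, because their product is zero, and odd `n` reduce to this by doubling
(`approx_small`). In characteristic two, `H_n` is the all-ones matrix, of rank one.

Low error. For a row `x`, the value `⟨x, y⟩` lies for most `y` in a window of `d + 1` integers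
centred near half the weight of `x`, with `d` of order `√n * log₂ (1 / ε)`. There `(-1) ^ j`
is a combination of the binomial coefficients `j.choose t` with `t ≤ d` and coefficients depending
only on `x` (`exists_interpolation`), and the matrix that results factors through the subsets of
size at most `d` (`rank_binomial_le`).
-/

open scoped Classical
open Finset

noncomputable section

def ip {n : ℕ} (x y : Fin n → Bool) : ℕ :=
  (Finset.univ.filter (fun i => x i ∧ y i)).card

def wt {n : ℕ} (x : Fin n → Bool) : ℕ :=
  (Finset.univ.filter (fun i => x i)).card

def Had (K : Type) [Field K] (n : ℕ) : Matrix (Fin n → Bool) (Fin n → Bool) K :=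
  Matrix.of fun x y => (-1 : K) ^ ip x y

def diffCount {n : ℕ} {K : Type} [Field K]
    (A B : Matrix (Fin n → Bool) (Fin n → Bool) K) : ℕ :=
  Nat.card {p : (Fin n → Bool) × (Fin n → Bool) // A p.1 p.2 ≠ B p.1 p.2}

def ProbRankLE {n : ℕ} {K : Type} [Field K]
    (A : Matrix (Fin n → Bool) (Fin n → Bool) K) (ε r : ℝ) : Prop :=
  ∃ (s : Finset (Matrix (Fin n → Bool) (Fin n → Bool) K))
    (w : Matrix (Fin n → Bool) (Fin n → Bool) K → ℝ),
    (∀ M ∈ s, 0 ≤ w M) ∧ (∑ M ∈ s, w M) = 1 ∧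
    (∀ M ∈ s, ((M.rank : ℝ)) ≤ r) ∧
    ∀ x y : Fin n → Bool, 1 - ε ≤ ∑ M ∈ s, (if M x y = A x y then w M else 0)

/-! ### Rank -/

open Matrix in
lemma rank_add_le' {X Y K : Type} [Fintype X] [Fintype Y] [Field K] (A B : Matrix X Y K) :
    (A + B).rank ≤ A.rank + B.rank := by
  rw [Matrix.rank, Matrix.rank, Matrix.rank, Matrix.mulVecLin_add]
  refine le_trans (Submodule.finrank_mono ?_) (Submodule.finrank_add_le_finrank_add_finrank _ _)
  rintro _ ⟨v, rfl⟩
  exact Submodule.add_mem_sup ⟨v, rfl⟩ ⟨v, rfl⟩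

lemma exists_rank_factorization {X Y K : Type} [Fintype X] [Fintype Y] [DecidableEq Y] [Field K]
    (A : Matrix X Y K) :
    ∃ (U : Matrix X (Fin A.rank) K) (V : Matrix (Fin A.rank) Y K), A = U * V := by
  let b : Module.Basis (Fin A.rank) K (LinearMap.range A.mulVecLin) := Module.finBasis K _
  let c : Y → LinearMap.range A.mulVecLin := fun y => ⟨A.mulVecLin (Pi.single y 1), ⟨_, rfl⟩⟩
  refine ⟨Matrix.of fun x i => (b i).1 x, Matrix.of fun i y => b.repr (c y) i, ?_⟩
  ext x y
  have h := congrArg (fun v : LinearMap.range A.mulVecLin => v.1 x) (b.sum_repr (c y))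
  simp only [Submodule.coe_sum, Submodule.coe_smul, Finset.sum_apply, Pi.smul_apply,
    smul_eq_mul] at h
  rw [Matrix.mul_apply]
  simp only [Matrix.of_apply]
  rw [show A x y = (c y).1 x by simp [c], ← h]
  exact Finset.sum_congr rfl fun i _ => mul_comm _ _

open scoped Kronecker in
lemma rank_kronecker_le {X Y K : Type} [Fintype X] [Fintype Y] [DecidableEq X] [DecidableEq Y]
    [Field K] (A : Matrix X X K) (B : Matrix Y Y K) :
    (A ⊗ₖ B).rank ≤ A.rank * Fintype.card Y := by
  obtain ⟨U, V, h⟩ := exists_rank_factorization A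
  have : A ⊗ₖ B = (U ⊗ₖ (1 : Matrix Y Y K)) * (V ⊗ₖ B) := by
    rw [← Matrix.mul_kronecker_mul, ← h, one_mul]
  rw [this]
  refine (Matrix.rank_mul_le_left _ _).trans ((Matrix.rank_le_card_width _).trans ?_)
  simp

/-! ### Sums of a low-rank and a row-sparse matrix -/

/-- `Approx A R σ`: some matrix of rank at most `R` agrees with `A` outside at most `σ` entries in
each row, i.e. `A` is a sum of a matrix of low rank and a row-sparse one. -/
def Approx {X K : Type} [Fintype X] [Field K] (A : Matrix X X K) (R σ : ℝ) : Prop :=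
  ∃ L : Matrix X X K, (L.rank : ℝ) ≤ R ∧
    ∀ x, ((Finset.univ.filter fun y => A x y ≠ L x y).card : ℝ) ≤ σ

lemma Approx.mono {X K : Type} [Fintype X] [Field K] {A : Matrix X X K} {R σ R' σ' : ℝ}
    (h : Approx A R σ) (hR : R ≤ R') (hσ : σ ≤ σ') : Approx A R' σ' := by
  obtain ⟨L, h1, h2⟩ := h
  exact ⟨L, h1.trans hR, fun x => (h2 x).trans hσ⟩

lemma Approx.submatrix {X Y K : Type} [Fintype X] [Fintype Y] [Field K] {A : Matrix Y Y K}
    {R σ : ℝ} (h : Approx A R σ) (e : X ≃ Y) : Approx (A.submatrix e e) R σ := by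
  obtain ⟨L, h1, h2⟩ := h
  refine ⟨L.submatrix e e, by rwa [Matrix.rank_submatrix], fun x => le_trans ?_ (h2 (e x))⟩
  norm_cast
  refine Finset.card_le_card_of_injOn e (fun y hy => ?_) e.injective.injOn
  exact Finset.mem_coe.2 (Finset.mem_filter.2
    ⟨Finset.mem_univ _, (Finset.mem_filter.1 (Finset.mem_coe.1 hy)).2⟩)

/-- If `A = S + L` and `B = S' + L'` then `A * B = S * S' + (S * L' + L * B)`, and products of
row-sparse matrices are row-sparse. -/
lemma Approx.mul {X K : Type} [Fintype X] [Field K] {A B : Matrix X X K} {R σ R' σ' : ℝ}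
    (hσ' : 0 ≤ σ') (h : Approx A R σ) (h' : Approx B R' σ') :
    Approx (A * B) (R + R') (σ * σ') := by
  obtain ⟨L, h1, h2⟩ := h
  obtain ⟨L', h1', h2'⟩ := h'
  refine ⟨(A - L) * L' + L * B, ?_, fun x => ?_⟩
  · have := rank_add_le' ((A - L) * L') (L * B)
    have a1 := Matrix.rank_mul_le_right (A - L) L'
    have a2 := Matrix.rank_mul_le_left L B
    have : (((A - L) * L' + L * B).rank : ℝ) ≤ (L.rank : ℝ) + L'.rank := by
      norm_cast; omega
    linarith
  · have key : (Finset.univ.filter fun y => (A * B) x y ≠ ((A - L) * L' + L * B) x y) ⊆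
        (Finset.univ.filter fun z => A x z ≠ L x z).biUnion
          fun z => Finset.univ.filter fun y => B z y ≠ L' z y := by
      intro y hy
      simp only [Finset.mem_filter, Finset.mem_univ, true_and, Finset.mem_biUnion] at hy ⊢
      by_contra hcon
      push Not at hcon
      apply hy
      have : ((A - L) * (B - L')) x y = 0 := by
        rw [Matrix.mul_apply]
        refine Finset.sum_eq_zero fun z _ => ?_
        by_cases hz : A x z = L x z
        · simp [hz]
        · simp [hcon z hz]
      have e : A * B = (A - L) * (B - L') + ((A - L) * L' + L * B) := by noncomm_ring
      rw [e, Matrix.add_apply, this, zero_add]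
    calc _ ≤ ((((Finset.univ.filter fun z => A x z ≠ L x z).biUnion
          fun z => Finset.univ.filter fun y => B z y ≠ L' z y).card : ℕ) : ℝ) := by
          exact_mod_cast Finset.card_le_card key
      _ ≤ ∑ z ∈ Finset.univ.filter (fun z => A x z ≠ L x z),
          ((Finset.univ.filter fun y => B z y ≠ L' z y).card : ℝ) := by
          exact_mod_cast Finset.card_biUnion_le
      _ ≤ ∑ z ∈ Finset.univ.filter (fun z => A x z ≠ L x z), σ' :=
          Finset.sum_le_sum fun z _ => h2' z
      _ = ((Finset.univ.filter fun z => A x z ≠ L x z).card : ℝ) * σ' := by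
          rw [Finset.sum_const, nsmul_eq_mul]
      _ ≤ σ * σ' := mul_le_mul_of_nonneg_right (h2 x) hσ'

open scoped Kronecker in
lemma Approx.kronecker {X Y K : Type} [Fintype X] [Fintype Y] [DecidableEq X] [DecidableEq Y]
    [Field K] {A : Matrix X X K} {R σ : ℝ} (h : Approx A R σ) (B : Matrix Y Y K) :
    Approx (A ⊗ₖ B) (R * Fintype.card Y) (σ * Fintype.card Y) := by
  obtain ⟨L, h1, h2⟩ := h
  refine ⟨L ⊗ₖ B, ?_, fun x => ?_⟩
  · have := rank_kronecker_le L B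
    calc ((L ⊗ₖ B).rank : ℝ) ≤ L.rank * Fintype.card Y := by exact_mod_cast this
      _ ≤ _ := by gcongr
  · have key : (Finset.univ.filter fun y => (A ⊗ₖ B) x y ≠ (L ⊗ₖ B) x y) ⊆
        (Finset.univ.filter fun z => A x.1 z ≠ L x.1 z) ×ˢ (Finset.univ : Finset Y) := by
      intro y hy
      refine Finset.mem_product.2 ⟨Finset.mem_filter.2 ⟨Finset.mem_univ _, fun h => ?_⟩,
        Finset.mem_univ _⟩
      exact (Finset.mem_filter.1 hy).2 (by rw [Matrix.kroneckerMap_apply, h]; rfl)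
    have := Finset.card_le_card key
    rw [Finset.card_product, Finset.card_univ] at this
    calc _ ≤ ((Finset.univ.filter fun z => A x.1 z ≠ L x.1 z).card : ℝ) * Fintype.card Y := by
          exact_mod_cast this
      _ ≤ _ := by gcongr; exact h2 _

lemma Approx.diagonal {X K : Type} [Fintype X] [DecidableEq X] [Field K] (d : X → K) :
    Approx (Matrix.diagonal d) 0 1 := by
  refine ⟨0, by simp, fun x => ?_⟩
  norm_cast
  rw [Finset.card_le_one]
  intro a ha b hb
  simp only [Finset.mem_filter, Finset.mem_univ, true_and, Matrix.zero_apply,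
    Matrix.diagonal_apply, ite_eq_right_iff, Classical.not_imp] at ha hb
  rw [← ha.1, hb.1]

/-! ### Counting words -/

/-- The exponential-moment (Chernoff) bound for counting words `y : ι → α`. -/
lemma card_filter_le_mgf {ι α : Type} [Fintype ι] [DecidableEq ι] [Fintype α]
    (φ : ι → α → ℝ) (T : ℝ) :
    ((Finset.univ.filter fun y : ι → α => T ≤ ∑ i, φ i (y i)).card : ℝ) ≤
      Real.exp (-T) * ∏ i, ∑ a, Real.exp (φ i a) := by
  have h1 : ((Finset.univ.filter fun y : ι → α => T ≤ ∑ i, φ i (y i)).card : ℝ) * Real.exp T ≤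
      ∏ i, ∑ a, Real.exp (φ i a) := by
    rw [Finset.prod_univ_sum, Fintype.piFinset_univ, ← nsmul_eq_mul, ← Finset.sum_const]
    calc _ ≤ ∑ y ∈ Finset.univ.filter (fun y : ι → α => T ≤ ∑ i, φ i (y i)),
          ∏ i, Real.exp (φ i (y i)) := by
          refine Finset.sum_le_sum fun y hy => ?_
          rw [← Real.exp_sum]
          exact Real.exp_le_exp.2 (Finset.mem_filter.1 hy).2
      _ ≤ _ := Finset.sum_le_sum_of_subset_of_nonneg (Finset.filter_subset _ _)
          fun y _ _ => Finset.prod_nonneg fun i _ => (Real.exp_pos _).le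
  rw [Real.exp_neg, inv_mul_eq_div, le_div_iff₀ (Real.exp_pos _)]
  exact h1

/-- Hoeffding-type bound: if each letter statistic `φ i` is subgaussian with variance proxy `1`
at the parameter `l`, then few words `y` have `∑ i, φ i (y i) ≥ T`. -/
lemma card_tail_le {ι α : Type} [Fintype ι] [DecidableEq ι] [Fintype α]
    (φ : ι → α → ℝ) (l T : ℝ) (hl : 0 < l)
    (h : ∀ i, ∑ a, Real.exp (l * φ i a) ≤ Fintype.card α * Real.exp (l ^ 2 / 2)) :
    ((Finset.univ.filter fun y : ι → α => T ≤ ∑ i, φ i (y i)).card : ℝ) ≤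
      (Fintype.card α : ℝ) ^ Fintype.card ι *
        Real.exp (Fintype.card ι * (l ^ 2 / 2) - l * T) := by
  have h1 := card_filter_le_mgf (fun i a => l * φ i a) (l * T)
  have h2 : (Finset.univ.filter fun y : ι → α => T ≤ ∑ i, φ i (y i)) ⊆
      Finset.univ.filter fun y : ι → α => l * T ≤ ∑ i, l * φ i (y i) := by
    intro y hy
    refine Finset.mem_filter.2 ⟨Finset.mem_univ _, ?_⟩
    rw [← Finset.mul_sum]
    exact mul_le_mul_of_nonneg_left (Finset.mem_filter.1 hy).2 hl.le
  have h3 : ∏ i, ∑ a, Real.exp (l * φ i a) ≤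
      ∏ _i : ι, ((Fintype.card α : ℝ) * Real.exp (l ^ 2 / 2)) :=
    Finset.prod_le_prod (fun i _ => Finset.sum_nonneg fun a _ => (Real.exp_pos _).le)
      fun i _ => h i
  calc _ ≤ ((Finset.univ.filter fun y : ι → α => l * T ≤ ∑ i, l * φ i (y i)).card : ℝ) := by
        exact_mod_cast Finset.card_le_card h2
    _ ≤ Real.exp (-(l * T)) * ∏ i, ∑ a, Real.exp (l * φ i a) := h1
    _ ≤ Real.exp (-(l * T)) * ∏ _i : ι, ((Fintype.card α : ℝ) * Real.exp (l ^ 2 / 2)) := by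
        gcongr
    _ = _ := by
        rw [Finset.prod_const, Finset.card_univ, mul_pow, ← Real.exp_nat_mul, sub_eq_add_neg,
          Real.exp_add]
        ring

/-! ### Kronecker powers of block unitriangular matrices -/

/-- The Kronecker power of `A` over the index set `ι`. -/
def tpow (ι : Type) [Fintype ι] {α K : Type} [Field K] (A : Matrix α α K) :
    Matrix (ι → α) (ι → α) K :=
  Matrix.of fun x y => ∏ i, A (x i) (y i)

lemma tpow_mul (ι : Type) [Fintype ι] [DecidableEq ι] {α K : Type} [Fintype α] [Field K]
    (A B : Matrix α α K) : tpow ι (A * B) = tpow ι A * tpow ι B := by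
  ext x y
  simp only [tpow, Matrix.of_apply, Matrix.mul_apply, Finset.prod_univ_sum,
    Fintype.piFinset_univ, Finset.prod_mul_distrib]

lemma tpow_diagonal (ι : Type) [Fintype ι] [DecidableEq ι] {α K : Type} [Fintype α]
    [DecidableEq α] [Field K] (d : α → K) :
    tpow ι (Matrix.diagonal d) = Matrix.diagonal fun x => ∏ i, d (x i) := by
  ext x y
  simp only [tpow, Matrix.of_apply, Matrix.diagonal_apply]
  split_ifs with h
  · subst h; simp
  · obtain ⟨i, hi⟩ := Function.ne_iff.1 h
    exact Finset.prod_eq_zero (Finset.mem_univ i) (by simp [hi])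

/-- If every nonzero entry of `M` lies in a row satisfying `P` or a column satisfying `Q`, then the
rank of `M` is at most the number of these rows and columns. -/
lemma rank_prune {X K : Type} [Fintype X] [Field K] (M : Matrix X X K) (P Q : X → Prop)
    (hM : ∀ x y, M x y ≠ 0 → P x ∨ Q y) :
    (M.rank : ℝ) ≤ (Finset.univ.filter P).card + (Finset.univ.filter Q).card := by
  let A : Matrix X X K := Matrix.of fun x y => if P x then M x y else 0
  let B : Matrix X X K := Matrix.of fun x y => if P x then 0 else M x y
  have hAB : M = A + B := by
    ext x y
    by_cases h : P x <;> simp [A, B, h]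
  have hA : A.rank ≤ (Finset.univ.filter P).card := by
    apply Matrix.rank_le_card_of_support_subset
    intro x hx
    by_contra hP
    have hP' : ¬ P x := by simpa using hP
    apply hx
    funext y
    simp [A, hP']
  have hB : B.rank ≤ (Finset.univ.filter Q).card := by
    rw [← Matrix.rank_transpose]
    apply Matrix.rank_le_card_of_support_subset
    intro y hy
    by_contra hQ
    have hQ' : ¬ Q y := by simpa using hQ
    apply hy
    funext x
    by_cases h : P x
    · simp [B, h]
    · have : M x y = 0 := by
        by_contra hne
        exact (hM x y hne).elim h hQ'
      simp [B, h, this]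
  have := rank_add_le' A B
  rw [← hAB] at this
  exact_mod_cast this.trans (add_le_add hA hB)

/-- The number of words at Hamming distance at most `s` from `x`, bounded by a generating
function. -/
lemma card_ball_le {α : Type} [Fintype α] [DecidableEq α] (m k : ℕ)
    (hk : Fintype.card α = 2 ^ k) (x : Fin m → α) (s : ℝ) :
    ((Finset.univ.filter fun z : Fin m → α =>
        ((Finset.univ.filter fun i => z i ≠ x i).card : ℝ) ≤ s).card : ℝ) ≤
      Real.exp (2 * k * Real.log 2 * s) * Real.exp (m * (1 / 2 ^ k)) := by
  -- With this parameter the `2 ^ k - 1` letters other than `x i` have total weight below `2 ^ (-k)`.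
  set L : ℝ := 2 * k * Real.log 2 with hL
  have hLpos : 0 ≤ L := by
    have := Real.log_pos (show (1 : ℝ) < 2 by norm_num)
    positivity
  have h1 := card_filter_le_mgf (fun i a => if a ≠ x i then -L else 0) (-(L * s))
  have h2 : (Finset.univ.filter fun z : Fin m → α =>
        ((Finset.univ.filter fun i => z i ≠ x i).card : ℝ) ≤ s) ⊆
      Finset.univ.filter fun z : Fin m → α => -(L * s) ≤ ∑ i, if z i ≠ x i then -L else 0 := by
    intro z hz
    have hz' := (Finset.mem_filter.1 hz).2
    refine Finset.mem_filter.2 ⟨Finset.mem_univ _, ?_⟩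
    rw [← Finset.sum_filter, Finset.sum_const, nsmul_eq_mul]
    nlinarith
  have hexp : Real.exp (-L) = (1 / 2 ^ k) * (1 / 2 ^ k) := by
    rw [hL, show -(2 * (k : ℝ) * Real.log 2) = (2 * k : ℕ) * (-Real.log 2) by push_cast; ring,
      Real.exp_nat_mul, Real.exp_neg, Real.exp_log (by norm_num), mul_comm 2 k, pow_mul,
      inv_pow]
    ring
  have h3 : ∀ i, ∑ a, Real.exp (if a ≠ x i then -L else 0) ≤ Real.exp (1 / 2 ^ k) := by
    intro i
    calc ∑ a, Real.exp (if a ≠ x i then -L else 0)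
        ≤ ∑ a, ((if a = x i then 1 else 0) + Real.exp (-L)) := by
          refine Finset.sum_le_sum fun a _ => ?_
          by_cases h : a = x i
          · simp [h, (Real.exp_pos _).le]
          · simp [h]
      _ = 1 / 2 ^ k + 1 := by
          rw [Finset.sum_add_distrib, Finset.sum_ite_eq' Finset.univ (x i), Finset.sum_const,
            Finset.card_univ, hk, hexp]
          simp
          ring
      _ ≤ _ := Real.add_one_le_exp _
  calc _ ≤ ((Finset.univ.filter fun z : Fin m → α =>
        -(L * s) ≤ ∑ i, if z i ≠ x i then -L else 0).card : ℝ) := by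
        exact_mod_cast Finset.card_le_card h2
    _ ≤ Real.exp (-(-(L * s))) * ∏ i, ∑ a, Real.exp (if a ≠ x i then -L else 0) := h1
    _ ≤ Real.exp (-(-(L * s))) * ∏ _i : Fin m, Real.exp (1 / 2 ^ k) := by
        gcongr with i _
        exact h3 i
    _ = _ := by
        rw [neg_neg, Finset.prod_const, Finset.card_univ, Fintype.card_fin, ← Real.exp_nat_mul]

/-- The signed indicator of a bit. -/
def sg (b : Bool) : ℝ := if b then 1 else -1

/-- Hoeffding's lemma for a statistic `f` that splits the letters into two equal halves. -/
lemma sum_exp_sg {α : Type} [Fintype α] (f : α → Bool)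
    (hf : 2 * (Finset.univ.filter fun a => f a = true).card = Fintype.card α) (l : ℝ) :
    ∑ a, Real.exp (l * sg (f a)) ≤ Fintype.card α * Real.exp (l ^ 2 / 2) := by
  have h2 := Finset.card_filter_add_card_filter_not (s := (Finset.univ : Finset α))
    (fun a => f a = true)
  rw [Finset.card_univ] at h2
  have e : ∑ a, Real.exp (l * sg (f a)) = Fintype.card α * Real.cosh l := by
    have : ∀ a, Real.exp (l * sg (f a)) = if f a = true then Real.exp l else Real.exp (-l) := by
      intro a
      cases f a <;> simp [sg]
    simp only [this]
    rw [Finset.sum_ite, Finset.sum_const, Finset.sum_const, nsmul_eq_mul, nsmul_eq_mul,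
      Real.cosh_eq]
    have c1 : (2 : ℝ) * (Finset.univ.filter fun a => f a = true).card = Fintype.card α := by
      exact_mod_cast hf
    have c2 : ((Finset.univ.filter fun a => f a = true).card : ℝ) +
        (Finset.univ.filter fun a => ¬ f a = true).card = Fintype.card α := by exact_mod_cast h2
    rw [show ((Finset.univ.filter fun a => ¬ f a = true).card : ℝ) = Fintype.card α / 2 by
      linarith, show ((Finset.univ.filter fun a => f a = true).card : ℝ) = Fintype.card α / 2 by
      linarith]
    ring
  rw [e]
  gcongr
  exact Real.cosh_le_exp_half_sq l

/-- Let `E` be block unitriangular for a splitting `f` of the letters into two halves. A typical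
row word and a typical column word have the same proportion of each half, and then a nonzero entry
of the Kronecker power `tpow (Fin m) E` forces the two words to agree in almost every position.
Removing the atypical rows and columns therefore costs little rank and leaves a row-sparse
matrix. -/
lemma approx_elementary {α K : Type} [Fintype α] [DecidableEq α] [Field K] (f : α → Bool)
    (hf : 2 * (Finset.univ.filter fun a => f a = true).card = Fintype.card α)
    (E : Matrix α α K) (hE : ∀ a b, E a b ≠ 0 → a = b ∨ (f a = true ∧ f b = false))
    (k m : ℕ) (hk : Fintype.card α = 2 ^ k) (hk1 : 1 ≤ k) :
    Approx (tpow (Fin m) E) (2 * (2 ^ (k * m) * Real.exp (-(2 * (1 / 2 ^ k) ^ 2 * m))))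
      ((2 : ℝ) ^ (6 * k * (1 / 2 ^ k) * m : ℝ)) := by
  set a : ℝ := 1 / 2 ^ k with ha
  have hapos : 0 < a := by positivity
  -- `P` and `Q` single out the atypical rows and columns: a proportion `1 / 2 ± a` of letters in
  -- the two halves is the boundary of what counts as typical.
  set T : ℝ := 2 * a * m with hT
  let P : (Fin m → α) → Prop := fun x => T ≤ ∑ i, sg (f (x i))
  let Q : (Fin m → α) → Prop := fun x => T ≤ ∑ i, -sg (f (x i))
  have hexp : (Fintype.card (Fin m) : ℝ) * ((2 * a) ^ 2 / 2) - 2 * a * T =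
      -(2 * a ^ 2 * m) := by
    rw [Fintype.card_fin, hT]; ring
  have hP : ((Finset.univ.filter P).card : ℝ) ≤ 2 ^ (k * m) * Real.exp (-(2 * a ^ 2 * m)) := by
    have := card_tail_le (fun (_ : Fin m) b => sg (f b)) (2 * a) T (by positivity)
      (fun _ => sum_exp_sg f hf _)
    rw [hexp, hk, Fintype.card_fin] at this
    rw [pow_mul]
    exact_mod_cast this
  have hQ : ((Finset.univ.filter Q).card : ℝ) ≤ 2 ^ (k * m) * Real.exp (-(2 * a ^ 2 * m)) := by
    have := card_tail_le (fun (_ : Fin m) b => -sg (f b)) (2 * a) T (by positivity)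
      (fun _ => by
        have := sum_exp_sg f hf (-(2 * a))
        rw [neg_sq] at this
        simpa using this)
    rw [hexp, hk, Fintype.card_fin] at this
    rw [pow_mul]
    exact_mod_cast this
  refine ⟨Matrix.of fun x y => if P x ∨ Q y then tpow (Fin m) E x y else 0, ?_, fun x => ?_⟩
  · refine (rank_prune _ P Q ?_).trans (by linarith)
    intro x y hxy
    by_contra hcon
    exact hxy (by simp [hcon])
  · refine le_trans (le_trans ?_ (card_ball_le m k hk x T)) ?_
    · norm_cast
      apply Finset.card_le_card
      intro z hz
      have hz := (Finset.mem_filter.1 hz).2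
      refine Finset.mem_filter.2 ⟨Finset.mem_univ _, ?_⟩
      have hPQ : ¬ (P x ∨ Q z) := fun h => hz (by simp [h])
      have hne : tpow (Fin m) E x z ≠ 0 := by
        intro h0
        exact hz (by simp [h0])
      push Not at hPQ
      obtain ⟨h1, h2⟩ := hPQ
      simp only [P, Q, not_le] at h1 h2
      have h3 : ∀ i, (sg (f (x i)) + -sg (f (z i))) = if z i ≠ x i then 2 else 0 := by
        intro i
        have hi : E (x i) (z i) ≠ 0 := by
          intro h0
          exact hne (Finset.prod_eq_zero (Finset.mem_univ i) h0)
        rcases hE _ _ hi with h | ⟨h, h'⟩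
        · simp [h]
        · have : z i ≠ x i := by
            intro h''
            rw [h'', h] at h'
            exact absurd h' (by decide)
          rw [if_pos this]
          simp only [sg, h, h']
          norm_num
      -- Each disagreement between `x` and `z` passes between the halves in the same direction, so
      -- the number of disagreements is half the sum of the two deviations.
      have h4 : ∑ i, sg (f (x i)) + ∑ i, -sg (f (z i)) =
          ((Finset.univ.filter fun i => z i ≠ x i).card : ℝ) * 2 := by
        rw [← Finset.sum_add_distrib, Finset.sum_congr rfl fun i _ => h3 i,
          ← Finset.sum_filter, Finset.sum_const, nsmul_eq_mul]
      linarith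
    · rw [← Real.exp_add, Real.rpow_def_of_pos (by norm_num)]
      apply Real.exp_le_exp.2
      have hl : (1 : ℝ) / 2 ≤ Real.log 2 := by have := Real.log_two_gt_d9; linarith
      have hk' : (1 : ℝ) ≤ k := by exact_mod_cast hk1
      have h5 : 0 ≤ a * m := by positivity
      have h6 : 1 / 2 ≤ k * Real.log 2 := by nlinarith
      rw [hT]
      change _ + m * a ≤ _
      nlinarith

/-! ### The Walsh–Hadamard matrix over an arbitrary index set -/

/-- The matrix `H_1`. -/
def had1 (K : Type) [Field K] : Matrix Bool Bool K :=
  Matrix.of fun a b => if a && b then -1 else 1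

/-- The Walsh–Hadamard matrix with coordinates indexed by an arbitrary finite type. -/
def hadI (K : Type) [Field K] (ι : Type) [Fintype ι] : Matrix (ι → Bool) (ι → Bool) K :=
  tpow ι (had1 K)

lemma Had_eq (K : Type) [Field K] (n : ℕ) : Had K n = hadI K (Fin n) := by
  ext x y
  simp only [Had, hadI, tpow, had1, Matrix.of_apply, ip]
  rw [Finset.prod_ite, Finset.prod_const, Finset.prod_const_one, mul_one]
  congr 2
  ext i
  simp

lemma hadI_sq (K : Type) [Field K] (ι : Type) [Fintype ι] [DecidableEq ι] :
    hadI K ι * hadI K ι = (2 ^ Fintype.card ι : K) • 1 := by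
  have h : had1 K * had1 K = Matrix.diagonal fun _ => (2 : K) := by
    ext a b
    cases a <;> cases b <;> simp [had1, Matrix.mul_apply]; all_goals norm_num
  rw [hadI, ← tpow_mul, h, tpow_diagonal, Finset.prod_const, Finset.card_univ,
    Matrix.smul_one_eq_diagonal]

lemma hadI_mul_self (K : Type) [Field K] (ι : Type) [Fintype ι] (x y : ι → Bool) :
    hadI K ι x y * hadI K ι x y = 1 := by
  simp only [hadI, tpow, had1, Matrix.of_apply]
  rw [← Finset.prod_mul_distrib]
  refine Finset.prod_eq_one fun i _ => ?_
  split_ifs <;> simp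

lemma hadI_xor (K : Type) [Field K] (ι : Type) [Fintype ι] (x y v : ι → Bool) :
    hadI K ι x (fun i => xor (y i) (v i)) = hadI K ι x y * hadI K ι x v := by
  have h : ∀ a b c, had1 K a (xor b c) = had1 K a b * had1 K a c := by
    intro a b c
    cases a <;> cases b <;> cases c <;> simp [had1]
  simp only [hadI, tpow, Matrix.of_apply, h, Finset.prod_mul_distrib]

lemma hadI_equiv (K : Type) [Field K] {ι ι' : Type} [Fintype ι] [Fintype ι'] (e : ι ≃ ι') :
    hadI K ι = (hadI K ι').submatrix (e.arrowCongr (Equiv.refl Bool))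
      (e.arrowCongr (Equiv.refl Bool)) := by
  ext x y
  simp only [hadI, tpow, Matrix.of_apply, Matrix.submatrix_apply]
  exact (Equiv.prod_comp e.symm fun i => had1 K (x i) (y i)).symm

/-- Splitting off one bit of a word. -/
def splitBit (κ : Type) : (Option κ → Bool) ≃ (κ → Bool) ⊕ (κ → Bool) :=
  (Equiv.piOptionEquivProd (β := fun _ => Bool)).trans (Equiv.boolProdEquivSum _)

/-- The doubling `[[h, h], [h, -h]]` of a matrix. -/
def dbl {β K : Type} [Field K] (h : Matrix β β K) : Matrix (β ⊕ β) (β ⊕ β) K :=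
  Matrix.fromBlocks h h h (-h)

lemma hadI_option (K : Type) [Field K] (κ : Type) [Fintype κ] :
    hadI K (Option κ) = (dbl (hadI K κ)).submatrix (splitBit κ) (splitBit κ) := by
  ext x y
  simp only [hadI, tpow, Matrix.of_apply, Matrix.submatrix_apply, Fintype.prod_option, dbl]
  cases hx : x none <;> cases hy : y none <;>
    simp [splitBit, Equiv.piOptionEquivProd, Equiv.boolProdEquivSum, hx, hy, had1]

/-- Cutting a word into `m` blocks, with a distinguished bit in each block, and a remainder. -/
def splitWord (m : ℕ) (κ ρ : Type) :
    ((Fin m × Option κ) ⊕ ρ → Bool) ≃ (Fin m → (κ → Bool) ⊕ (κ → Bool)) × (ρ → Bool) :=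
  (Equiv.sumArrowEquivProdArrow _ _ _).trans
    (((Equiv.curry _ _ _).trans ((Equiv.refl (Fin m)).arrowCongr (splitBit κ))).prodCongr
      (Equiv.refl _))

open scoped Kronecker in
lemma hadI_word (K : Type) [Field K] (m : ℕ) (κ ρ : Type) [Fintype κ] [Fintype ρ] :
    hadI K ((Fin m × Option κ) ⊕ ρ) =
      (tpow (Fin m) (dbl (hadI K κ)) ⊗ₖ hadI K ρ).submatrix (splitWord m κ ρ)
        (splitWord m κ ρ) := by
  ext x y
  have h := fun i => congrFun (congrFun (hadI_option K κ) fun j => x (Sum.inl (i, j)))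
    fun j => y (Sum.inl (i, j))
  simp only [Matrix.submatrix_apply, Matrix.kroneckerMap_apply]
  have e : tpow (Fin m) (dbl (hadI K κ)) (splitWord m κ ρ x).1 (splitWord m κ ρ y).1 =
      ∏ i, hadI K (Option κ) (fun j => x (Sum.inl (i, j))) fun j => y (Sum.inl (i, j)) := by
    rw [tpow, Matrix.of_apply]
    exact Finset.prod_congr rfl fun i _ => (h i).symm
  rw [e]
  simp only [hadI, tpow, Matrix.of_apply, Fintype.prod_sum_type, Fintype.prod_prod_type]
  rfl

/-- If `h ^ 2 = q` then the doubling of `h` is a product of three block unitriangular matrices and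
a diagonal one. -/
lemma dbl_factor {β K : Type} [Fintype β] [DecidableEq β] [Field K] (h : Matrix β β K) (q : K)
    (hh : h * h = q • 1) (hq : q ≠ 0) (h2 : (2 : K) ≠ 0) :
    dbl h = Matrix.fromBlocks 1 0 (-1 + (2 : K) • h) 1 *
      (Matrix.fromBlocks 1 (-(2 * q)⁻¹ • h) 0 1 *
        (Matrix.fromBlocks 1 0 (-(2 * q) • (1 : Matrix β β K) + (2 : K) • h) 1 *
          Matrix.diagonal (Sum.elim (fun _ => (1 : K)) fun _ => -(2 * q)))) := by
  have hd : Matrix.diagonal (Sum.elim (fun _ : β => (1 : K)) fun _ : β => -(2 * q)) =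
      Matrix.fromBlocks 1 0 0 (-(2 * q) • (1 : Matrix β β K)) := by
    rw [Matrix.smul_one_eq_diagonal, ← Matrix.diagonal_one, Matrix.fromBlocks_diagonal]
  have h2q : 2 * q ≠ 0 := mul_ne_zero h2 hq
  rw [hd, dbl]
  simp only [Matrix.fromBlocks_multiply, Matrix.mul_zero, Matrix.zero_mul, Matrix.mul_one,
    Matrix.one_mul, add_zero, zero_add, mul_add, add_mul, Matrix.smul_mul, Matrix.mul_smul, hh,
    smul_smul, neg_mul, mul_neg, neg_smul, neg_neg]
  congr 1
  all_goals ext i j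
  all_goals simp only [Matrix.add_apply, Matrix.smul_apply, Matrix.neg_apply, Matrix.zero_apply,
    smul_eq_mul]
  all_goals field_simp
  all_goals ring

/-! ### Low-rank approximations for the high-error regime -/

/-- As `hadI ^ 2 = 4 ^ p`, the ranks of `hadI - 2 ^ p` and `hadI + 2 ^ p` sum to at most
the size of the matrix. -/
lemma exists_root (K : Type) [Field K] (ι : Type) [Fintype ι] [DecidableEq ι] (p : ℕ)
    (hι : Fintype.card ι = 2 * p) :
    ∃ s : K, 2 * (hadI K ι - s • (1 : Matrix (ι → Bool) (ι → Bool) K)).rank ≤ 2 ^ (2 * p) := by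
  set h := hadI K ι
  have hh : h * h = (2 ^ p * 2 ^ p : K) • 1 := by
    rw [hadI_sq, hι, two_mul, pow_add]
  have h0 : (h - (2 ^ p : K) • 1) * (h - (-2 ^ p : K) • 1) = 0 := by
    simp only [sub_mul, mul_sub, hh, Matrix.smul_mul, Matrix.mul_smul, one_mul, mul_one, smul_smul]
    module
  have := Matrix.rank_add_rank_le_card_of_mul_eq_zero h0
  simp only [Fintype.card_pi, Fintype.card_bool, Finset.prod_const, Finset.card_univ, hι] at this
  by_cases hc : (h - (2 ^ p : K) • 1).rank ≤ (h - (-2 ^ p : K) • 1).rank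
  · exact ⟨2 ^ p, by omega⟩
  · exact ⟨-2 ^ p, by omega⟩

/-- Changing at most one entry in each row of `H_n` makes its rank drop by a constant factor. -/
lemma approx_small (K : Type) [Field K] (n : ℕ) : Approx (Had K n) (3 / 4 * 2 ^ n) 1 := by
  obtain ⟨p, hp | hp⟩ := Nat.even_or_odd' n
  · subst hp
    obtain ⟨s, hs⟩ := exists_root K (Fin (2 * p)) p (by simp)
    rw [Had_eq]
    refine ⟨hadI K (Fin (2 * p)) - s • 1, ?_, fun x => ?_⟩
    · have : (2 : ℝ) * (hadI K (Fin (2 * p)) - s • 1).rank ≤ 2 ^ (2 * p) := by exact_mod_cast hs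
      have h2 : (0 : ℝ) < 2 ^ (2 * p) := by positivity
      linarith
    · norm_cast
      rw [Finset.card_le_one]
      have key : ∀ y, hadI K (Fin (2 * p)) x y ≠ (hadI K (Fin (2 * p)) - s • 1) x y → x = y := by
        intro y hy
        by_contra hne
        exact hy (by simp [hne])
      intro a ha b hb
      rw [← key a (Finset.mem_filter.1 ha).2, ← key b (Finset.mem_filter.1 hb).2]
  · subst hp
    obtain ⟨s, hs⟩ := exists_root K (Fin (2 * p)) p (by simp)
    rw [Had_eq, hadI_equiv K (Fintype.equivOfCardEq (by simp) : Fin (2 * p + 1) ≃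
      Option (Fin (2 * p))), hadI_option]
    refine Approx.submatrix (Approx.submatrix ?_ _) _
    set h := hadI K (Fin (2 * p))
    -- `L` changes the entry `h x x` of the top left block to `h x x - 2 * s`. It is the sum of
    -- `2 • (h - s • 1)` in that block and of a matrix of rank at most `2 ^ (2 * p)`.
    let N : Matrix ((Fin (2 * p) → Bool) ⊕ (Fin (2 * p) → Bool)) (Fin (2 * p) → Bool) K :=
      Matrix.fromRows h (-h)
    let J : Matrix (Fin (2 * p) → Bool) ((Fin (2 * p) → Bool) ⊕ (Fin (2 * p) → Bool)) K :=
      Matrix.fromCols (-1) 1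
    let L := (Matrix.fromRows (1 : Matrix (Fin (2 * p) → Bool) (Fin (2 * p) → Bool) K)
        (0 : Matrix (Fin (2 * p) → Bool) (Fin (2 * p) → Bool) K)) * ((2 : K) • (h - s • 1)) *
      (Matrix.fromCols (1 : Matrix (Fin (2 * p) → Bool) (Fin (2 * p) → Bool) K)
        (0 : Matrix (Fin (2 * p) → Bool) (Fin (2 * p) → Bool) K)) +
      N * J
    have hL : L = Matrix.fromBlocks (h - (2 * s) • 1) h h (-h) := by
      have hN : N * J = Matrix.fromBlocks (-h) h h (-h) := by
        simp only [J, Matrix.mul_fromCols]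
        ext (i | i) (j | j) <;> simp [N]
      simp only [L, hN, Matrix.fromRows_mul, Matrix.mul_fromCols, Matrix.one_mul, Matrix.zero_mul,
        Matrix.mul_one, Matrix.mul_zero]
      ext (i | i) (j | j)
      · simp [Matrix.fromBlocks]; ring
      · simp [Matrix.fromBlocks]
      · simp [Matrix.fromBlocks]
      · simp [Matrix.fromBlocks]
    have hr : L.rank ≤ (h - s • 1).rank + 2 ^ (2 * p) := by
      refine (rank_add_le' _ _).trans (add_le_add ?_ ?_)
      · refine (Matrix.rank_mul_le_left _ _).trans ((Matrix.rank_mul_le_right _ _).trans ?_)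
        rw [show (2 : K) • (h - s • 1) = (h - s • 1) * ((2 : K) • 1) by simp]
        exact Matrix.rank_mul_le_left _ _
      · refine (Matrix.rank_mul_le_left _ _).trans ((Matrix.rank_le_card_width _).trans ?_)
        simp
    refine ⟨L, ?_, fun x => ?_⟩
    · have : (2 : ℝ) * (h - s • 1).rank ≤ 2 ^ (2 * p) := by exact_mod_cast hs
      have : (L.rank : ℝ) ≤ (h - s • 1).rank + 2 ^ (2 * p) := by exact_mod_cast hr
      rw [pow_succ]
      linarith
    · norm_cast
      rw [Finset.card_le_one]
      have key : ∀ y, dbl h x y ≠ L x y → x = y := by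
        intro y hy
        by_contra hne
        rw [hL] at hy
        apply hy
        rcases x with x | x <;> rcases y with y | y <;> simp [dbl]
        rw [Matrix.one_apply_ne fun h => hne (by rw [h])]
        simp
      intro a ha b hb
      rw [← key a (Finset.mem_filter.1 ha).2, ← key b (Finset.mem_filter.1 hb).2]

open scoped Kronecker in
/-- The word of `n = m * (j + 1) + r` bits is cut into `m` blocks of `j + 1` bits, each block being a
letter whose first bit determines its half of the alphabet; the last `r` bits are not used to lower
the rank. -/
lemma approx_large (K : Type) [Field K] (h2 : (2 : K) ≠ 0) (n m j r : ℕ)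
    (hn : n = m * (j + 1) + r) :
    Approx (Had K n)
      (6 * 2 ^ n * Real.exp (-(2 * (1 / 2 ^ (j + 1)) ^ 2 * m)))
      ((2 : ℝ) ^ (18 * (j + 1) * (1 / 2 ^ (j + 1)) * m + r : ℝ)) := by
  have hcard : Fintype.card ((Fin j → Bool) ⊕ (Fin j → Bool)) = 2 ^ (j + 1) := by
    simp [pow_succ, mul_two]
  rw [Had_eq, hadI_equiv K (Fintype.equivOfCardEq (by simp [hn]) : Fin n ≃
      (Fin m × Option (Fin j)) ⊕ Fin r), hadI_word]
  refine Approx.submatrix (Approx.submatrix ?_ _) _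
  rw [dbl_factor (hadI K (Fin j)) (2 ^ j) (by rw [hadI_sq, Fintype.card_fin]) (pow_ne_zero _ h2) h2,
    tpow_mul, tpow_mul, tpow_mul, tpow_diagonal]
  set σ : ℝ := (2 : ℝ) ^ (6 * (j + 1 : ℕ) * (1 / 2 ^ (j + 1)) * m : ℝ) with hσ
  have hσ0 : 0 < σ := by positivity
  set R : ℝ := 2 * (2 ^ ((j + 1) * m) * Real.exp (-(2 * (1 / 2 ^ (j + 1)) ^ 2 * m))) with hR
  have lower : ∀ P : Matrix (Fin j → Bool) (Fin j → Bool) K,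
      Approx (tpow (Fin m) (Matrix.fromBlocks 1 0 P 1)) R σ := by
    intro P
    refine approx_elementary (fun a => a.isRight) ?_ _ ?_ (j + 1) m hcard (by omega)
    · rw [Finset.card_filter, Fintype.sum_sum_type]; simp; ring
    · rintro (a | a) (b | b) hab <;> simp at hab ⊢
      · by_contra h; exact hab (Matrix.one_apply_ne h)
      · by_contra h; exact hab (Matrix.one_apply_ne h)
  have upper : ∀ P : Matrix (Fin j → Bool) (Fin j → Bool) K,
      Approx (tpow (Fin m) (Matrix.fromBlocks 1 P 0 1)) R σ := by
    intro P
    refine approx_elementary (fun a => a.isLeft) ?_ _ ?_ (j + 1) m hcard (by omega)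
    · rw [Finset.card_filter, Fintype.sum_sum_type]; simp; ring
    · rintro (a | a) (b | b) hab <;> simp at hab ⊢
      · by_contra h; exact hab (Matrix.one_apply_ne h)
      · by_contra h; exact hab (Matrix.one_apply_ne h)
  have := fun d => ((lower (-1 + (2 : K) • hadI K (Fin j))).mul (by positivity)
    ((upper (-(2 * 2 ^ j : K)⁻¹ • hadI K (Fin j))).mul (by positivity)
      ((lower (-(2 * 2 ^ j : K) • (1 : Matrix _ _ K) + (2 : K) • hadI K (Fin j))).mul zero_le_one
        (Approx.diagonal d)))).kronecker (hadI K (Fin r))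
  refine (this _).mono (le_of_eq ?_) (le_of_eq ?_)
  · rw [hR, hn]
    simp only [Fintype.card_pi, Fintype.card_bool, Finset.prod_const, Finset.card_univ,
      Fintype.card_fin]
    push_cast
    rw [pow_add, mul_comm m]
    ring
  · simp only [Fintype.card_pi, Fintype.card_bool, Finset.prod_const, Finset.card_univ,
      Fintype.card_fin]
    rw [Real.rpow_add (by norm_num), Real.rpow_natCast,
      show (18 * (j + 1 : ℝ) * (1 / 2 ^ (j + 1)) * m) =
        (6 * (j + 1 : ℕ) * (1 / 2 ^ (j + 1)) * m : ℝ) * (3 : ℕ) by push_cast; ring,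
      Real.rpow_mul (by norm_num), Real.rpow_natCast, ← hσ]
    push_cast
    ring

lemma approx_char_two (K : Type) [Field K] (h2 : (2 : K) = 0) (n : ℕ) :
    Approx (Had K n) 1 0 := by
  refine ⟨Had K n, ?_, by simp⟩
  have : Had K n = Matrix.vecMulVec (fun _ => 1) (fun _ => 1) := by
    have h1 : (-1 : K) = 1 := by linear_combination -h2
    ext x y
    simp [Had, Matrix.vecMulVec_apply, h1]
  rw [this]
  exact_mod_cast Matrix.rank_vecMulVec_le _ _

/-! ### From approximation to probabilistic rank -/

/-- Random self-reduction: if `L` is close to `H_n` row by row, then for a uniformly random `v` the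
matrix with entries `H_n(x, v) * L(x, y + v)` is correct at any given entry with high
probability. -/
lemma probRank_of_approx (K : Type) [Field K] (n : ℕ) {R σ ε r : ℝ}
    (h : Approx (Had K n) R σ) (hR : R ≤ r) (hσ : σ ≤ ε * 2 ^ n) :
    ProbRankLE (Had K n) ε r := by
  obtain ⟨L, h1, h2⟩ := h
  rw [Had_eq] at h2 ⊢
  set H := hadI K (Fin n)
  have hinv : ∀ v : Fin n → Bool,
      Function.Involutive fun (y : Fin n → Bool) i => xor (y i) (v i) := by
    intro v y
    funext i
    simp
  let M : (Fin n → Bool) → Matrix (Fin n → Bool) (Fin n → Bool) K := fun v =>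
    Matrix.diagonal (fun x => H x v) * L.submatrix (Equiv.refl _) (hinv v).toPerm
  let w : Matrix (Fin n → Bool) (Fin n → Bool) K → ℝ := fun N =>
    ((Finset.univ.filter fun v => M v = N).card : ℝ) * (1 / 2 ^ n)
  have hw : ∀ g : Matrix (Fin n → Bool) (Fin n → Bool) K → ℝ,
      ∑ N ∈ Finset.univ.image M, w N * g N = (∑ v, g (M v)) * (1 / 2 ^ n) := by
    intro g
    rw [Finset.sum_comp g M, Finset.sum_mul]
    refine Finset.sum_congr rfl fun N _ => ?_
    rw [nsmul_eq_mul]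
    simp only [w]
    ring
  have hpos : (0 : ℝ) < 2 ^ n := by positivity
  refine ⟨Finset.univ.image M, w, fun N _ => by positivity, ?_, ?_, fun x y => ?_⟩
  · have := hw fun _ => 1
    simp only [mul_one] at this
    rw [this]
    simp
  · intro N hN
    obtain ⟨v, -, rfl⟩ := Finset.mem_image.1 hN
    have : (M v).rank ≤ L.rank := by
      refine (Matrix.rank_mul_le_right _ _).trans ?_
      rw [Matrix.rank_submatrix]
    exact (Nat.cast_le.2 this).trans (h1.trans hR)
  · have e1 : ∑ N ∈ Finset.univ.image M, (if N x y = H x y then w N else 0) =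
        (∑ v, if M v x y = H x y then (1 : ℝ) else 0) * (1 / 2 ^ n) := by
      rw [← hw fun N => if N x y = H x y then (1 : ℝ) else 0]
      simp
    rw [e1, Finset.sum_boole]
    have e2 := Finset.card_filter_add_card_filter_not (s := (Finset.univ : Finset (Fin n → Bool)))
      fun v => M v x y = H x y
    have e3 : (Finset.univ.filter fun v => ¬ M v x y = H x y).card ≤
        (Finset.univ.filter fun z => H x z ≠ L x z).card := by
      refine Finset.card_le_card_of_injOn (fun v i => xor (y i) (v i)) (fun v hv => ?_) ?_
      · refine Finset.mem_coe.2 (Finset.mem_filter.2 ⟨Finset.mem_univ _, fun heq => ?_⟩)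
        refine (Finset.mem_filter.1 (Finset.mem_coe.1 hv)).2 ?_
        have : M v x y = H x v * L x (fun i => xor (y i) (v i)) := by
          simp only [M, Matrix.diagonal_mul]
          rfl
        have hx : H x (fun i => xor (y i) (v i)) = H x y * H x v := hadI_xor K (Fin n) x y v
        have hx' : H x v * H x v = 1 := hadI_mul_self K (Fin n) x v
        have heq' : H x (fun i => xor (y i) (v i)) = L x fun i => xor (y i) (v i) := heq
        rw [this, ← heq', hx, mul_comm (H x v), mul_assoc, hx', mul_one]
      · intro v _ v' _ hvv
        funext i
        exact Bool.xor_right_inj.1 (congrFun hvv i)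
    have e4 := h2 x
    have e5 : ((Finset.univ.filter fun v => M v x y = H x y).card : ℝ) +
        (Finset.univ.filter fun v => ¬ M v x y = H x y).card = 2 ^ n := by
      have : (Finset.univ : Finset (Fin n → Bool)).card = 2 ^ n := by simp
      rw [this] at e2
      exact_mod_cast e2
    have e6 : ((Finset.univ.filter fun v => ¬ M v x y = H x y).card : ℝ) ≤
      (Finset.univ.filter fun z => H x z ≠ L x z).card := by exact_mod_cast e3
    rw [mul_one_div, le_div_iff₀ hpos]
    linarith

/-! ### The high-error bound -/

/-- The proof compares everything with `s = ε ^ 2 * n / log₂ (1 / ε)`: the exponent gained is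
`s / 10 ^ 6`. While `s ≤ 62208` this is below `1 / 4` and `approx_small` applies; for larger `s`,
`approx_large` gains at least `s / 10368 - 3`. -/
lemma upper_high_error (K : Type) [Field K] (ε : ℝ) (h0 : 0 < ε) (h1 : ε < 1 / 72) (n : ℕ) :
    ProbRankLE (Had K n) (2 ^ (-((n : ℝ) * (1 - ε))))
      (2 ^ ((n : ℝ) - 1 / 10 ^ 6 * ε ^ 2 * n / Real.logb 2 (1 / ε))) := by
  set E := Real.logb 2 (1 / ε) with hE
  have hinv : 72 < 1 / ε := by
    rw [lt_div_iff₀ h0]; linarith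
  have h2E : (2 : ℝ) ^ E = 1 / ε :=
    Real.rpow_logb (by norm_num) (by norm_num) (by positivity)
  have hE6 : 6 ≤ E := by
    rw [hE, Real.le_logb_iff_rpow_le (by norm_num) (by positivity)]
    norm_num at hinv ⊢
    linarith
  set s := ε ^ 2 * n / E with hs
  have hs0 : 0 ≤ s := by positivity
  have ht : 1 / 10 ^ 6 * ε ^ 2 * n / E = s / 10 ^ 6 := by rw [hs]; ring
  rw [ht]
  have hn0 : (0 : ℝ) ≤ n := Nat.cast_nonneg n
  have hsn : s ≤ n := by
    rw [hs, div_le_iff₀ (by linarith)]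
    have : ε ^ 2 ≤ E := by nlinarith
    nlinarith
  have herr : (2 : ℝ) ^ (-((n : ℝ) * (1 - ε))) * 2 ^ n = 2 ^ (ε * n) := by
    rw [← Real.rpow_natCast, ← Real.rpow_add (by norm_num)]
    congr 1; ring
  have hrank : (2 : ℝ) ^ ((n : ℝ) - s / 10 ^ 6) = 2 ^ n * 2 ^ (-(s / 10 ^ 6)) := by
    rw [← Real.rpow_natCast 2 n, ← Real.rpow_add (by norm_num)]
    rfl
  by_cases h2 : (2 : K) = 0
  · refine probRank_of_approx K n (approx_char_two K h2 n) ?_ (by positivity)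
    apply Real.one_le_rpow (by norm_num)
    linarith
  rcases le_or_gt s 62208 with hsmall | hlarge
  · refine probRank_of_approx K n (approx_small K n) ?_ ?_
    · rw [hrank, mul_comm]
      refine mul_le_mul_of_nonneg_left ?_ (by positivity)
      have hlog : Real.log 2 ≤ 1 := by have := Real.log_two_lt_d9; linarith
      have hlog0 : 0 ≤ Real.log 2 := Real.log_nonneg (by norm_num)
      rw [Real.rpow_def_of_pos (by norm_num)]
      have := Real.add_one_le_exp (Real.log 2 * -(s / 10 ^ 6))
      nlinarith
    · rw [herr]
      exact Real.one_le_rpow (by norm_num) (by positivity)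
  · -- The block length `j + 1` is chosen so that `ε / 72 ≤ 2 ^ (-(j + 1)) ≤ ε / 36`: the first
    -- inequality bounds the rank, the second keeps the sparsity below `2 ^ (ε * n)`.
    obtain ⟨j, hj1, hj2⟩ := exists_nat_pow_near (x := 36 / ε) (y := (2 : ℝ))
      (by rw [le_div_iff₀ h0]; linarith) (by norm_num)
    set a : ℝ := 1 / 2 ^ (j + 1) with ha
    have ha1 : a ≤ ε / 36 := by
      rw [ha, div_le_div_iff₀ (by positivity) (by norm_num)]
      rw [div_lt_iff₀ h0] at hj2
      linarith
    have ha2 : ε / 72 ≤ a := by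
      rw [ha, div_le_div_iff₀ (by norm_num) (by positivity)]
      rw [le_div_iff₀ h0] at hj1
      rw [pow_succ]; linarith
    have hkE : ((j + 1 : ℕ) : ℝ) ≤ 2 * E := by
      have : (2 : ℝ) ^ ((j + 1 : ℕ) : ℝ) ≤ 2 ^ (2 * E) := by
        rw [mul_comm, Real.rpow_mul (by norm_num), h2E, Real.rpow_natCast, Real.rpow_two]
        calc (2 : ℝ) ^ (j + 1) ≤ 2 * (36 / ε) := by rw [pow_succ]; linarith
          _ = 72 * (1 / ε) := by ring
          _ ≤ (1 / ε) ^ 2 := by nlinarith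
      exact (Real.rpow_le_rpow_left_iff (by norm_num)).1 this
    have hnlarge : 62208 * E < ε ^ 2 * n := by
      rwa [hs, lt_div_iff₀ (by linarith)] at hlarge
    have hεn : 4 * E ≤ ε * n := by nlinarith
    have hεn' : ε * n ≤ n := by nlinarith
    set k := j + 1 with hk
    have hdiv := Nat.div_add_mod' n k
    have hmod := Nat.mod_lt n (show 0 < k by omega)
    set m := n / k
    set r := n % k
    have hmodR : (r : ℝ) ≤ k := by exact_mod_cast hmod.le
    have hdivR : (m : ℝ) * k + r = n := by exact_mod_cast hdiv
    have hm0 : (0 : ℝ) ≤ m := Nat.cast_nonneg m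
    have hr0 : (0 : ℝ) ≤ r := Nat.cast_nonneg r
    have hapos : 0 < a := by positivity
    refine probRank_of_approx K n (approx_large K h2 n m j r hdiv.symm) ?_ ?_
    · rw [hrank, mul_comm 6, mul_assoc]
      refine mul_le_mul_of_nonneg_left ?_ (by positivity)
      have hmk : n / 2 ≤ (m : ℝ) * (2 * E) := by nlinarith
      have hu : s / 10368 ≤ 2 * a ^ 2 * m := by
        rw [hs, div_div, div_le_iff₀ (by positivity)]
        have : (ε / 72) ^ 2 ≤ a ^ 2 := by gcongr
        have hmE : 0 ≤ (m : ℝ) * E := mul_nonneg hm0 (by linarith)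
        calc ε ^ 2 * n ≤ ε ^ 2 * (4 * (m * E)) := by
              apply mul_le_mul_of_nonneg_left _ (sq_nonneg ε)
              linarith
          _ = (ε / 72) ^ 2 * (20736 * (m * E)) := by ring
          _ ≤ a ^ 2 * (20736 * (m * E)) := mul_le_mul_of_nonneg_right this (by positivity)
          _ = _ := by ring
      have hu0 : 0 ≤ 2 * a ^ 2 * m := by positivity
      have hlog : Real.log 2 ≤ 1 := by have := Real.log_two_lt_d9; linarith
      -- Here `2 * a ^ 2 * m ≥ s / 10368 > 6` absorbs the factor `6 ≤ 2 ^ 3`.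
      calc 6 * Real.exp (-(2 * a ^ 2 * m)) ≤ 2 ^ (3 : ℝ) * 2 ^ (-(2 * a ^ 2 * m)) := by
            gcongr
            · norm_num
            · rw [Real.rpow_def_of_pos (by norm_num)]
              apply Real.exp_le_exp.2
              nlinarith
        _ ≤ 2 ^ (-(s / 10 ^ 6)) := by
            rw [← Real.rpow_add (by norm_num)]
            apply Real.rpow_le_rpow_of_exponent_le (by norm_num)
            linarith
    · rw [herr]
      apply Real.rpow_le_rpow_of_exponent_le (by norm_num)
      have h3 : a * (m * k) ≤ ε / 36 * n := by
        apply mul_le_mul ha1 (by linarith) (by positivity) (by positivity)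
      have h4 : (k : ℝ) = j + 1 := by rw [hk]; push_cast; ring
      have h5 : (18 : ℝ) * (j + 1) * a * m = 18 * (a * (m * k)) := by rw [h4]; ring
      have : (18 : ℝ) * (j + 1) * a * m + r ≤ ε * n := by
        rw [h5]; linarith
      exact this

/-! ### The low-error bound -/

/-- Solvability of the recursion that moves the interpolation window by one step. -/
lemma exists_alternating {K : Type} [Field K] (d : ℕ) : ∀ c : ℕ → K,
    ∃ c' : ℕ → K, c' d = 0 ∧ ∀ t < d, c' t + c' (t + 1) = -c t := by
  induction d with
  | zero => exact fun c => ⟨0, rfl, by simp⟩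
  | succ d ih =>
    intro c
    obtain ⟨c', h0, h1⟩ := ih fun t => c (t + 1)
    refine ⟨fun t => Nat.casesOn t (-c 0 - c' 0) c', h0, fun t ht => ?_⟩
    cases t with
    | zero => simp
    | succ t => exact h1 t (by omega)

/-- On any window of `d + 1` consecutive integers, `j ↦ (-1) ^ j` is a combination over `K` of the
binomial coefficients `j.choose t` with `t ≤ d`. In contrast to interpolation by ordinary
polynomials this holds in every characteristic: the window is moved one step at a time by Pascal's
rule. -/
lemma exists_interpolation (K : Type) [Field K] (d l : ℕ) :
    ∃ c : ℕ → K, ∀ j, l ≤ j → j ≤ l + d →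
      ∑ t ∈ Finset.range (d + 1), c t * (j.choose t : K) = (-1) ^ j := by
  induction l with
  | zero =>
    -- The binomial expansion of `(1 - 2) ^ j`.
    refine ⟨fun t => (-2) ^ t, fun j _ hj => ?_⟩
    rw [show (-1 : K) = -2 + 1 by norm_num, add_pow]
    simp only [one_pow, mul_one]
    refine (Finset.sum_subset (Finset.range_mono (by omega)) fun t _ ht => ?_).symm
    rw [Nat.choose_eq_zero_of_lt (by simpa using ht)]
    simp
  | succ l ih =>
    obtain ⟨c, hc⟩ := ih
    obtain ⟨c', h0, h1⟩ := exists_alternating (d + 1) c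
    refine ⟨c', fun j hj hj' => ?_⟩
    obtain ⟨j, rfl⟩ : ∃ i, j = i + 1 := ⟨j - 1, by omega⟩
    have e : ∑ t ∈ Finset.range (d + 1), c' t * ((j + 1).choose t : K) =
        ∑ t ∈ Finset.range (d + 1), (c' t + c' (t + 1)) * (j.choose t : K) := by
      have a1 : ∑ t ∈ Finset.range (d + 1), c' (t + 1) * (j.choose t : K) =
          ∑ t ∈ Finset.range d, c' (t + 1) * (j.choose t : K) := by
        rw [Finset.sum_range_succ, h0, zero_mul, add_zero]
      simp only [add_mul, Finset.sum_add_distrib]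
      rw [a1, Finset.sum_range_succ', Finset.sum_range_succ' (fun t => c' t * (j.choose t : K))]
      simp only [Nat.choose_succ_succ, Nat.cast_add, mul_add, Finset.sum_add_distrib,
        Nat.choose_zero_right]
      ring
    rw [e, Finset.sum_congr rfl fun t ht => by rw [h1 t (Finset.mem_range.1 ht), neg_mul],
      Finset.sum_neg_distrib, hc j (by omega) (by omega), pow_succ]
    ring

/-- `(ip x y).choose t` counts the `t`-subsets `z` contained in both supports, which factors the
matrix through the subsets of size at most `d`. -/
lemma rank_binomial_le (K : Type) [Field K] (n d : ℕ) (c : (Fin n → Bool) → ℕ → K) :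
    (Matrix.of fun x y : Fin n → Bool =>
      ∑ t ∈ Finset.range (d + 1), c x t * ((ip x y).choose t : K)).rank ≤
      ∑ t ∈ Finset.range (d + 1), n.choose t := by
  let S : (Fin n → Bool) → Finset (Fin n) := fun x => Finset.univ.filter fun i => x i
  let ζ := Σ t : Fin (d + 1), {z // z ∈ Finset.powersetCard t (Finset.univ : Finset (Fin n))}
  let U : Matrix (Fin n → Bool) ζ K := Matrix.of fun x z => if z.2.1 ⊆ S x then c x z.1 else 0
  let V : Matrix ζ (Fin n → Bool) K := Matrix.of fun z y => if z.2.1 ⊆ S y then 1 else 0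
  have h : (Matrix.of fun x y : Fin n → Bool =>
      ∑ t ∈ Finset.range (d + 1), c x t * ((ip x y).choose t : K)) = U * V := by
    ext x y
    rw [Matrix.mul_apply, Matrix.of_apply, Fintype.sum_sigma, Finset.sum_range]
    refine Finset.sum_congr rfl fun t _ => ?_
    simp only [U, V, Matrix.of_apply]
    rw [Finset.sum_coe_sort (Finset.powersetCard t (Finset.univ : Finset (Fin n)))
      fun z => (if z ⊆ S x then c x t else 0) * (if z ⊆ S y then 1 else 0)]
    have e : ∀ z : Finset (Fin n), (if z ⊆ S x then c x t else 0) * (if z ⊆ S y then 1 else 0) =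
        if z ⊆ S x ∩ S y then c x t else 0 := by
      intro z
      simp only [Finset.subset_inter_iff]
      split_ifs <;> simp_all
    simp only [e]
    rw [← Finset.sum_filter, Finset.sum_const, nsmul_eq_mul, mul_comm]
    congr 2
    have : (Finset.powersetCard t (Finset.univ : Finset (Fin n))).filter (· ⊆ S x ∩ S y) =
        Finset.powersetCard t (S x ∩ S y) := by
      ext z
      simp [Finset.mem_powersetCard, and_comm]
    rw [this, Finset.card_powersetCard]
    congr 1
    simp only [ip, S]
    rw [← Finset.filter_and]
  rw [h]
  refine (Matrix.rank_mul_le_left _ _).trans ((Matrix.rank_le_card_width _).trans ?_)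
  simp only [ζ, Fintype.card_sigma, Fintype.card_coe, Finset.card_powersetCard, Finset.card_univ,
    Fintype.card_fin]
  rw [Finset.sum_range]

lemma two_mul_ip_sub (n : ℕ) (x y : Fin n → Bool) :
    ∑ i, (if x i then sg (y i) else 0) = 2 * (ip x y : ℝ) - wt x := by
  have e : ∀ i, (if x i then sg (y i) else 0) =
      2 * (if x i ∧ y i then (1 : ℝ) else 0) - if x i then 1 else 0 := by
    intro i
    cases x i <;> cases y i <;> simp [sg]
    norm_num
  rw [Finset.sum_congr rfl fun i _ => e i, Finset.sum_sub_distrib, ← Finset.mul_sum,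
    Finset.sum_boole, Finset.sum_boole]
  rfl

/-- For most `y` the value of `⟨x, y⟩` lies in a window of `d + 1` integers around `wt x / 2`, which
depends on the row only. -/
lemma approx_window (K : Type) [Field K] (n d : ℕ) (hn : 0 < n) (hd : 0 < d) :
    Approx (Had K n) (∑ t ∈ Finset.range (d + 1), n.choose t : ℕ)
      (2 * 2 ^ n * Real.exp (-((d : ℝ) ^ 2 / (2 * n)))) := by
  -- Truncated subtraction is harmless: if `wt x < d` the window is `[0, d]`, which still contains
  -- every `j` with `|2 * j - wt x| < d`.
  choose c hc using fun x : Fin n → Bool => exists_interpolation K d ((wt x - d) / 2)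
  refine ⟨_, Nat.cast_le.2 (rank_binomial_le K n d c), fun x => ?_⟩
  have hnR : (0 : ℝ) < n := by exact_mod_cast hn
  have hdR : (0 : ℝ) < d := by exact_mod_cast hd
  have hexp : (Fintype.card (Fin n) : ℝ) * (((d : ℝ) / n) ^ 2 / 2) - (d : ℝ) / n * d =
      -((d : ℝ) ^ 2 / (2 * n)) := by
    rw [Fintype.card_fin]
    field_simp
    ring
  have hmgf : ∀ (l : ℝ) (i : Fin n), ∑ b : Bool, Real.exp (l * if x i then sg b else 0) ≤
      Fintype.card Bool * Real.exp (l ^ 2 / 2) := by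
    intro l i
    by_cases h : x i
    · simp only [h, if_true]
      exact sum_exp_sg (fun b : Bool => b) (by decide) l
    · have := Real.one_le_exp (show 0 ≤ l ^ 2 / 2 by positivity)
      simp only [h, Bool.false_eq_true, if_false, mul_zero, Real.exp_zero]
      simpa using this
  have h1 := card_tail_le (fun (i : Fin n) b => if x i then sg b else 0) (d / n) d (by positivity)
    (hmgf _)
  have h2 := card_tail_le (fun (i : Fin n) b => -(if x i then sg b else 0)) (d / n) d
    (by positivity) (fun i => by
      have := hmgf (-(d / n)) i
      rw [neg_sq] at this
      simpa only [neg_mul, mul_neg] using this)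
  rw [hexp, Fintype.card_bool, Fintype.card_fin] at h1 h2
  simp only [Finset.sum_neg_distrib, two_mul_ip_sub] at h1 h2
  have key : (Finset.univ.filter fun y => Had K n x y ≠ (Matrix.of fun x y : Fin n → Bool =>
      ∑ t ∈ Finset.range (d + 1), c x t * ((ip x y).choose t : K)) x y) ⊆
      (Finset.univ.filter fun y => (d : ℝ) ≤ 2 * (ip x y : ℝ) - wt x) ∪
      (Finset.univ.filter fun y => (d : ℝ) ≤ -(2 * (ip x y : ℝ) - wt x)) := by
    intro y hy
    have hy := (Finset.mem_filter.1 hy).2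
    by_contra hcon
    simp only [Finset.mem_union, Finset.mem_filter, Finset.mem_univ, true_and, not_or,
      not_le] at hcon
    obtain ⟨b1, b2⟩ := hcon
    have b1' : 2 * ip x y < wt x + d := by
      have : (2 : ℝ) * ip x y < wt x + d := by linarith
      exact_mod_cast this
    have b2' : wt x < 2 * ip x y + d := by
      have : (wt x : ℝ) < 2 * ip x y + d := by linarith
      exact_mod_cast this
    exact hy (hc x (ip x y) (by omega) (by omega)).symm
  have := (Finset.card_le_card key).trans (Finset.card_union_le _ _)
  have h3 : ((Finset.univ.filter fun y => Had K n x y ≠ (Matrix.of fun x y : Fin n → Bool =>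
      ∑ t ∈ Finset.range (d + 1), c x t * ((ip x y).choose t : K)) x y).card : ℝ) ≤
      (Finset.univ.filter fun y => (d : ℝ) ≤ 2 * (ip x y : ℝ) - wt x).card +
      (Finset.univ.filter fun y => (d : ℝ) ≤ -(2 * (ip x y : ℝ) - wt x)).card := by
    exact_mod_cast this
  push_cast at h1 h2
  linarith

lemma sum_choose_le (n d : ℕ) (hn : 2 ≤ n) :
    ∑ t ∈ Finset.range (d + 1), n.choose t ≤ n ^ (2 * d) := by
  calc ∑ t ∈ Finset.range (d + 1), n.choose t
      ≤ ∑ t ∈ Finset.range (d + 1), n ^ t * 1 ^ (d - t) * d.choose t := by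
        refine Finset.sum_le_sum fun t ht => ?_
        have h1 := Nat.choose_le_pow n t
        have h2 := Nat.choose_pos (show t ≤ d by simpa [Nat.lt_succ_iff] using ht)
        rw [one_pow, mul_one]
        exact h1.trans (Nat.le_mul_of_pos_right _ h2)
    _ = (n + 1) ^ d := (add_pow n 1 d).symm
    _ ≤ (n ^ 2) ^ d := Nat.pow_le_pow_left (by nlinarith) d
    _ = n ^ (2 * d) := (pow_mul n 2 d).symm

lemma upper_low_error (K : Type) [Field K] (ε : ℝ) (h0 : 0 < ε) (h1 : ε ≤ 1 / 2) (n : ℕ) :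
    ProbRankLE (Had K n) ε ((1 / ε) ^ (6 * (1 + Real.sqrt n * Real.logb 2 n))) := by
  have hinv : 2 ≤ 1 / ε := by
    rw [le_div_iff₀ h0]; linarith
  have hpos : (0 : ℝ) < 1 / ε := by positivity
  rcases Nat.lt_or_ge n 2 with hn | hn
  · -- Here `√n * log₂ n = 0` and `H_n` itself has rank at most `2 ≤ 1 / ε`.
    have hA : Approx (Had K n) ((Had K n).rank) 0 := ⟨Had K n, le_rfl, by simp⟩
    refine probRank_of_approx K n hA ?_ (by positivity)
    have hlog : Real.logb 2 n = 0 := by interval_cases n <;> simp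
    rw [hlog, mul_zero, add_zero, mul_one]
    have hr : (Had K n).rank ≤ 2 := by
      refine (Matrix.rank_le_card_width _).trans ?_
      simp only [Fintype.card_pi, Fintype.card_bool, Finset.prod_const, Finset.card_univ,
        Fintype.card_fin]
      interval_cases n <;> norm_num
    calc ((Had K n).rank : ℝ) ≤ 2 := by exact_mod_cast hr
      _ ≤ (1 / ε) ^ (1 : ℝ) := by rwa [Real.rpow_one]
      _ ≤ (1 / ε) ^ (6 : ℝ) :=
        Real.rpow_le_rpow_of_exponent_le (by linarith) (by norm_num)
  · set E := Real.logb 2 (1 / ε) with hE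
    have h2E : (2 : ℝ) ^ E = 1 / ε := Real.rpow_logb (by norm_num) (by norm_num) hpos
    have hE1 : 1 ≤ E := by
      rw [hE, Real.le_logb_iff_rpow_le (by norm_num) hpos, Real.rpow_one]
      exact hinv
    have hnR : (2 : ℝ) ≤ n := by exact_mod_cast hn
    set q := Real.sqrt n with hq
    have hq1 : 1 ≤ q := by
      rw [hq, Real.one_le_sqrt]; linarith
    have hqq : q * q = n := Real.mul_self_sqrt (by linarith)
    -- Then `d ^ 2 / (2 * n) ≥ 2 * E`, and at most a proportion `2 * ε ^ 2 ≤ ε` of a row is wrong.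
    set d := ⌈2 * E * q⌉₊ with hd
    have hEq : 1 ≤ E * q := by nlinarith
    have hd1 : 2 * E * q ≤ d := Nat.le_ceil _
    have hd2 : (d : ℝ) ≤ 3 * E * q := by
      have := Nat.ceil_lt_add_one (show 0 ≤ 2 * E * q by positivity)
      linarith
    have hd0 : 0 < d := by
      have : (0 : ℝ) < d := by linarith
      exact_mod_cast this
    refine probRank_of_approx K n (approx_window K n d (by omega) hd0) ?_ ?_
    · have hlogn : (2 : ℝ) ^ Real.logb 2 n = n :=
        Real.rpow_logb (by norm_num) (by norm_num) (by linarith)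
      have hlog0 : 0 ≤ Real.logb 2 n := Real.logb_nonneg (by norm_num) (by linarith)
      calc ((∑ t ∈ Finset.range (d + 1), n.choose t : ℕ) : ℝ) ≤ (n : ℝ) ^ (2 * d) := by
            exact_mod_cast sum_choose_le n d hn
        _ = 2 ^ (Real.logb 2 n * (2 * d : ℕ)) := by
            rw [Real.rpow_mul (by norm_num), hlogn, Real.rpow_natCast]
        _ ≤ 2 ^ (E * (6 * (1 + q * Real.logb 2 n))) := by
            apply Real.rpow_le_rpow_of_exponent_le (by norm_num)
            push_cast
            have := mul_le_mul_of_nonneg_left hd2 hlog0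
            nlinarith
        _ = _ := by rw [Real.rpow_mul (by norm_num), h2E]
    · have hdn : 2 * E ≤ (d : ℝ) ^ 2 / (2 * n) := by
        rw [le_div_iff₀ (by linarith), ← hqq]
        have : (2 * E * q) ^ 2 ≤ (d : ℝ) ^ 2 := by gcongr
        nlinarith [mul_self_nonneg q]
      have hexp : Real.exp (-(2 * E)) ≤ ε * ε := by
        calc Real.exp (-(2 * E)) ≤ 2 ^ (-(2 * E)) := by
              rw [Real.rpow_def_of_pos (by norm_num)]
              apply Real.exp_le_exp.2
              have : Real.log 2 ≤ 1 := by have := Real.log_two_lt_d9; linarith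
              nlinarith
          _ = ε * ε := by
              rw [show -(2 * E) = E * (-2 : ℝ) by ring, Real.rpow_mul (by norm_num), h2E,
                Real.rpow_neg hpos.le, Real.rpow_two]
              field_simp
      have : Real.exp (-((d : ℝ) ^ 2 / (2 * n))) ≤ ε * ε :=
        (Real.exp_le_exp.2 (by linarith)).trans hexp
      have h2n : (0 : ℝ) < 2 ^ n := by positivity
      have : 2 * Real.exp (-((d : ℝ) ^ 2 / (2 * n))) ≤ ε := by nlinarith
      nlinarith

/-- Probabilistic rank upper bounds for the Walsh-Hadamard matrix. -/
theorem hadamard_probRank_upper :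
    ∃ c c' ε₀ : ℝ, 0 < c ∧ 0 < c' ∧ 0 < ε₀ ∧
      ∀ (K : Type) [Field K],
        (∀ ε : ℝ, 0 < ε → ε < ε₀ → ∀ n : ℕ,
          ProbRankLE (Had K n) (2 ^ (-((n : ℝ) * (1 - ε))))
            (2 ^ ((n : ℝ) - c * ε ^ 2 * n / Real.logb 2 (1 / ε)))) ∧
        (∀ ε : ℝ, 0 < ε → ε ≤ 1 / 2 → ∀ n : ℕ,
          ProbRankLE (Had K n) ε ((1 / ε) ^ (c' * (1 + Real.sqrt n * Real.logb 2 n)))) := by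
  refine ⟨1 / 10 ^ 6, 6, 1 / 72, by norm_num, by norm_num, by norm_num, fun K _ => ⟨?_, ?_⟩⟩
  · exact upper_high_error K
  · exact upper_low_error K
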